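/- arXiv:1710.04293 — 4 statements merged into one kernel-verified Lean document; each statement's English description precedes it below -/
import Mathlib

section
/- Let t ≥ 1 and let a = (a_1, …, a_{t+2}) and b = (b_2, …, b_t) be sequences of variables from {x_1, …, x_n} (repetitions allowed). For 1 ≤ j ≤ t+2 set a^{(j)} := (a_1, …, a_{j-1}, a_{j+1}, …, a_{t+2}) (a_j omitted) and b^{(j)} := (a_j, b_2, …, b_t). Then Σ_{j=1}^{t+2} (-1)^j · z_{a^{(j)}, b^{(j)}} = 0 in S_1 ⊗_k ⋀^t S_2. -/
set_option maxHeartbeats 1000000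
set_option synthInstance.maxHeartbeats 400000

open scoped TensorProduct
open MvPolynomial

noncomputable section

variable (k : Type) [Field k] (n : ℕ)

/-- The polynomial ring `S = k[x_1,…,x_n]`. -/
abbrev S := MvPolynomial (Fin n) k

/-- The space `S_1` of linear forms. -/
abbrev S1 := homogeneousSubmodule (Fin n) k 1

/-- The space `S_2` of quadratic forms. -/
abbrev S2 := homogeneousSubmodule (Fin n) k 2

/-- The ambient algebra `S ⊗ Λ(S_2)` containing all terms `K_t = S ⊗ ⋀^t S_2`
of the Koszul complex `K(𝔪², S)`; the product is `(f ⊗ ω)(g ⊗ η) = fg ⊗ ω∧η`. -/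
abbrev KK := (MvPolynomial (Fin n) k) ⊗[k] ExteriorAlgebra k (S2 k n)

variable {k n}

/-- The product of two linear forms, as an element of `S_2`. -/
def mulW (a b : S1 k n) : S2 k n :=
  ⟨(a : S k n) * (b : S k n), by
    rw [mem_homogeneousSubmodule]
    have ha := (mem_homogeneousSubmodule 1 (a : S k n)).1 a.2
    have hb := (mem_homogeneousSubmodule 1 (b : S k n)).1 b.2
    simpa using ha.mul hb⟩

/-- The variable `x_i`, as an element of `S_1`. -/
def xv (i : Fin n) : S1 k n :=
  ⟨X i, by rw [mem_homogeneousSubmodule]; exact isHomogeneous_X _ _⟩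

/-- The quadratic monomial `x_i x_j`, as an element of `S_2`. -/
def q (i j : Fin n) : S2 k n := mulW (xv i) (xv j)

variable (k n)

/-- `K_t = S ⊗ ⋀^t S_2`, as a subspace of the ambient algebra `KK`. -/
def Kt (t : ℕ) : Submodule k (KK k n) :=
  LinearMap.range (TensorProduct.map (LinearMap.id : S k n →ₗ[k] S k n)
    (Submodule.subtype (⋀[k]^t (S2 k n))))

variable {k n}

/-- The family of Koszul differentials, encoded as linear endomorphisms of the
ambient space `KK`: `D t` restricted to `K_t` is the `t`-th Koszul differential
`d_t : K_t → K_{t-1}`, i.e. `d_0 = 0` and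
`d_t(f ⊗ m_1 ∧ ⋯ ∧ m_t) = Σ_j (-1)^{j-1} (f·m_j) ⊗ m_1 ∧ ⋯ ∧ m̂_j ∧ ⋯ ∧ m_t`. -/
def IsKoszulDiff (D : ℕ → KK k n →ₗ[k] KK k n) : Prop :=
  D 0 = 0 ∧
  ∀ (t : ℕ) (f : S k n) (m : Fin (t+1) → S2 k n),
    D (t+1) (f ⊗ₜ[k] (ExteriorAlgebra.ιMulti k (t+1) m : ExteriorAlgebra k (S2 k n)))
      = ∑ j : Fin (t+1), ((-1:ℤ)^(j:ℕ)) •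
          ((f * ((m j : S k n))) ⊗ₜ[k]
            (ExteriorAlgebra.ιMulti k t (fun l => m (j.succAbove l)) : ExteriorAlgebra k (S2 k n)))

/-- The cycle `z_{a,b} = Σ_{σ ∈ 𝔖_{t+1}} sgn(σ) a_{σ(t+1)} ⊗ (b_1 a_{σ(1)} ∧ ⋯ ∧ b_t a_{σ(t)})`. -/
def zel (t : ℕ) (a : Fin (t+1) → S1 k n) (b : Fin t → S1 k n) : KK k n :=
  ∑ σ : Equiv.Perm (Fin (t+1)),
    ((Equiv.Perm.sign σ : ℤ)) •
      (((a (σ (Fin.last t)) : S k n)) ⊗ₜ[k]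
        (ExteriorAlgebra.ιMulti k t (fun j => mulW (b j) (a (σ j.castSucc))) :
          ExteriorAlgebra k (S2 k n)))

/-- The cycle `Z_i` (0-indexed: `Zel i` is the paper's `Z_i` for `0 ≤ i ≤ n-1`), namely
`Z_i = Σ_{j=0}^{i} (-1)^{j} x_j ⊗ (x_0 x_i ∧ ⋯ ∧ x̂_j x_i ∧ ⋯ ∧ x_{i-1} x_i ∧ x_i²)`. -/
def Zel (i : Fin n) : KK k n :=
  ∑ j : Fin ((i:ℕ)+1),
    ((-1:ℤ)^(j:ℕ)) •
      ((X (Fin.castLE i.isLt j) : S k n) ⊗ₜ[k]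
        (ExteriorAlgebra.ιMulti k (i:ℕ)
          (fun l : Fin (i:ℕ) => q (Fin.castLE i.isLt (j.succAbove l)) i) :
            ExteriorAlgebra k (S2 k n)))


/-- Summand after reindexing over the larger symmetric group. -/
def gF (t : ℕ) (a : Fin (t+3) → S1 k n) (b : Fin t → S1 k n)
    (τ : Equiv.Perm (Fin (t+3))) : KK k n :=
  ((Equiv.Perm.sign τ : ℤ)) •
    (((a (τ (Fin.last (t+2))) : S k n)) ⊗ₜ[k]
      (ExteriorAlgebra.ιMulti k (t+1)
        (fun i => mulW (Fin.cons (α := fun _ => S1 k n) (a (τ 0)) b i)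
          (a (τ i.castSucc.succ))) : ExteriorAlgebra k (S2 k n)))

theorem mulW_comm' (x y : S1 k n) : mulW x y = mulW y x :=
  Subtype.ext (mul_comm _ _)

theorem gF_swap (t : ℕ) (a : Fin (t+3) → S1 k n) (b : Fin t → S1 k n)
    (τ : Equiv.Perm (Fin (t+3))) : gF t a b (τ * Equiv.swap 0 1) = - gF t a b τ := by
  have h01 : (0 : Fin (t+3)) ≠ 1 := by simp [Fin.ext_iff]
  have hl : Equiv.swap (0 : Fin (t+3)) 1 (Fin.last (t+2)) = Fin.last (t+2) :=
    Equiv.swap_apply_of_ne_of_ne (by simp [Fin.ext_iff]) (by simp [Fin.ext_iff])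
  have hfun : (fun i : Fin (t+1) => mulW (Fin.cons (α := fun _ => S1 k n)
        (a ((τ * Equiv.swap 0 1 : Equiv.Perm (Fin (t+3))) 0)) b i) (a ((τ * Equiv.swap 0 1 : Equiv.Perm (Fin (t+3))) i.castSucc.succ)))
      = (fun i : Fin (t+1) => mulW (Fin.cons (α := fun _ => S1 k n) (a (τ 0)) b i)
          (a (τ i.castSucc.succ))) := by
    funext i
    refine Fin.cases ?_ (fun i => ?_) i
    · have : (Fin.castSucc (0 : Fin (t+1))).succ = (1 : Fin (t+3)) := rfl
      rw [this]
      simp only [Fin.cons_zero, Equiv.Perm.mul_apply, Equiv.swap_apply_left,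
        Equiv.swap_apply_right]
      exact mulW_comm' _ _
    · have : Equiv.swap (0 : Fin (t+3)) 1 i.succ.castSucc.succ = i.succ.castSucc.succ :=
        Equiv.swap_apply_of_ne_of_ne (by simp [Fin.ext_iff]) (by simp [Fin.ext_iff])
      simp only [Fin.cons_succ, Equiv.Perm.mul_apply, this]
  unfold gF
  rw [hfun, Equiv.Perm.mul_apply, hl, Equiv.Perm.sign_mul, Equiv.Perm.sign_swap h01]
  simp

theorem gF_sum (t : ℕ) (a : Fin (t+3) → S1 k n) (b : Fin t → S1 k n) :
    ∑ τ, gF t a b τ = 0 := by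
  refine Finset.sum_involution (fun τ _ => τ * Equiv.swap 0 1) ?_ ?_ ?_ ?_
  · intro τ _
    rw [gF_swap, add_neg_cancel]
  · intro τ _ _ h
    have := congrArg (fun f : Equiv.Perm (Fin (t+3)) => f 0) h
    simp [Fin.ext_iff] at this
  · intro τ _
    exact Finset.mem_univ _
  · intro τ _
    simp [mul_assoc]

/-- The permutation sending `0` to `j` and `i+1` to `j.succAbove (σ i)`. -/
def gE (m : ℕ) (p : Fin (m+1) × Equiv.Perm (Fin m)) : Equiv.Perm (Fin (m+1)) :=
  p.1.cycleRange.symm * Equiv.Perm.decomposeFin.symm (0, p.2)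

theorem gE_zero (m : ℕ) (p : Fin (m+1) × Equiv.Perm (Fin m)) : gE m p 0 = p.1 := by
  simp [gE]

theorem gE_succ (m : ℕ) (p : Fin (m+1) × Equiv.Perm (Fin m)) (i : Fin m) :
    gE m p i.succ = p.1.succAbove (p.2 i) := by
  simp [gE]

theorem gE_sign (m : ℕ) (p : Fin (m+1) × Equiv.Perm (Fin m)) :
    (Equiv.Perm.sign (gE m p) : ℤ) = (-1)^(p.1 : ℕ) * (Equiv.Perm.sign p.2 : ℤ) := by
  simp [gE]

theorem gE_bij (m : ℕ) : Function.Bijective (gE m) := by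
  rw [Fintype.bijective_iff_injective_and_card]
  constructor
  · rintro ⟨j, σ⟩ ⟨j', σ'⟩ h
    have h0 := congrArg (fun f : Equiv.Perm (Fin (m+1)) => f 0) h
    simp only [gE_zero] at h0
    subst h0
    congr 1
    ext i : 1
    have hi := congrArg (fun f : Equiv.Perm (Fin (m+1)) => f i.succ) h
    simp only [gE_succ] at hi
    exact Fin.succAbove_right_injective hi
  · simp [Fintype.card_perm, Nat.factorial_succ]

/-- **Garnir-type relations.** Let `t ≥ 1` (encoded as `t+1` for `t : ℕ`),
let `a = (a_1,…,a_{t+3})` and `b = (b_2,…,b_{t+1})` be sequences of variables (repetitions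
allowed).  For each `j` let `a⁽ʲ⁾` be `a` with its `j`-th entry omitted and
`b⁽ʲ⁾ = (a_j, b_2, …, b_{t+1})`.  Then `Σ_j (-1)^j z_{a⁽ʲ⁾, b⁽ʲ⁾} = 0`. -/
theorem garnir_relation (k : Type) [Field k] [CharZero k] (n : ℕ)
    (t : ℕ) (a : Fin (t+3) → Fin n) (b : Fin t → Fin n) :
    ∑ j : Fin (t+3), ((-1:ℤ)^((j:ℕ)+1)) •
      (zel (t+1) (fun l => (xv (a (j.succAbove l)) : S1 k n))
        (Fin.cons (α := fun _ => S1 k n) (xv (a j)) (fun l => xv (b l))) : KK k n)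
      = (0 : KK k n) := by
  have key : ∀ j : Fin (t+3), ((-1:ℤ)^((j:ℕ)+1)) •
      (zel (t+1) (fun l => (xv (a (j.succAbove l)) : S1 k n))
        (Fin.cons (α := fun _ => S1 k n) (xv (a j)) (fun l => xv (b l))) : KK k n)
      = - ∑ σ : Equiv.Perm (Fin (t+2)),
          gF t (fun i => (xv (a i) : S1 k n)) (fun l => xv (b l)) (gE (t+2) (j, σ)) := by
    intro j
    unfold zel gF
    rw [pow_succ, mul_neg_one, neg_smul, Finset.smul_sum]
    congr 1
    refine Finset.sum_congr rfl (fun σ _ => ?_)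
    rw [gE_sign, smul_smul, ← Fin.succ_last (t+1)]
    simp only [gE_zero, gE_succ]
  rw [Finset.sum_congr rfl (fun j _ => key j), Finset.sum_neg_distrib,
    ← Fintype.sum_prod_type' (fun j σ => gF t (fun i => (xv (a i) : S1 k n))
      (fun l => xv (b l)) (gE (t+2) (j, σ)))]
  rw [neg_eq_zero]
  exact ((gE_bij (t+2)).sum_comp
    (gF t (fun i => (xv (a i) : S1 k n)) (fun l => xv (b l)))).trans (gF_sum t _ _)

end
end

section
/- For every t ≥ 0 and all sequences a = (a_1, …, a_{t+1}) and b = (b_1, …, b_t) of elements of S_1, the element z_{a,b} is a Koszul cycle: d_t(z_{a,b}) = 0 in K_{t-1}. -/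
set_option maxHeartbeats 1000000
set_option synthInstance.maxHeartbeats 400000

open scoped TensorProduct
open MvPolynomial

noncomputable section

variable (k : Type) [Field k] (n : ℕ)

variable {k n}

variable (k n)

variable {k n}

/-- For every `t ≥ 0` and all sequences `a = (a_1,…,a_{t+1})`,
`b = (b_1,…,b_t)` of elements of `S_1`, the element `z_{a,b}` is a Koszul cycle:
`d_t(z_{a,b}) = 0`. -/
theorem koszul_cycle_zel (k : Type) [Field k] [CharZero k] (n : ℕ)
    (t : ℕ) (a : Fin (t+1) → S1 k n) (b : Fin t → S1 k n)
    (D : ℕ → KK k n →ₗ[k] KK k n) (hD : IsKoszulDiff D) :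
    D t (zel t a b) = 0 := by
  cases t with
  | zero => rw [hD.1]; rfl
  | succ t =>
    unfold zel
    rw [map_sum]
    simp only [map_zsmul, hD.2, Finset.smul_sum]
    rw [Finset.sum_comm]
    refine Finset.sum_eq_zero fun j _ => ?_
    have hne : j.castSucc ≠ Fin.last (t+1) := (Fin.castSucc_lt_last j).ne
    refine Finset.sum_involution
      (fun σ _ => σ * Equiv.swap j.castSucc (Fin.last (t+1))) ?_ ?_ ?_ ?_
    · intro σ _
      have h1 : ∀ l : Fin t, Equiv.swap j.castSucc (Fin.last (t+1)) (j.succAbove l).castSucc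
          = (j.succAbove l).castSucc := fun l =>
        Equiv.swap_apply_of_ne_of_ne
          (fun h => Fin.succAbove_ne j l (Fin.castSucc_injective _ h))
          (Fin.castSucc_lt_last _).ne
      have h2 : ((a (σ (Fin.last (t+1))) : S k n)) * (mulW (b j) (a (σ j.castSucc)) : S2 k n)
          = ((a (σ j.castSucc) : S k n)) * (mulW (b j) (a (σ (Fin.last (t+1)))) : S2 k n) := by
        simp only [mulW]; ring
      simp only [Equiv.Perm.sign_mul, Equiv.Perm.sign_swap hne, Equiv.Perm.mul_apply, h1,
        Equiv.swap_apply_left, Equiv.swap_apply_right, h2]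
      simp only [mul_neg, mul_one, Units.val_neg, neg_smul, add_neg_cancel]
    · intro σ _ _ h
      have h3 : Equiv.swap j.castSucc (Fin.last (t+1)) = 1 := by simpa using h
      exact hne (Equiv.swap_eq_one_iff.1 h3)
    · intro σ _; exact Finset.mem_univ _
    · intro σ _; simp [mul_assoc]

end
end

section
/- The product Z_0 · Z_1 · ⋯ · Z_{n-1} is a nonzero element of K_N, where N = n(n-1)/2. -/
set_option maxHeartbeats 1000000
set_option synthInstance.maxHeartbeats 400000

open scoped TensorProduct
open MvPolynomial

noncomputable section

variable (k : Type) [Field k] (n : ℕ)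

variable {k n}

variable (k n)

variable {k n}

theorem aux_tmul_mem {t : ℕ} (f : S k n) {w : ExteriorAlgebra k (S2 k n)}
    (hw : w ∈ ⋀[k]^t (S2 k n)) : (f ⊗ₜ[k] w : KK k n) ∈ Kt k n t :=
  ⟨f ⊗ₜ[k] (⟨w, hw⟩ : ⋀[k]^t (S2 k n)), by simp⟩

theorem aux_mul_mem {s t : ℕ} {a b : KK k n} (ha : a ∈ Kt k n s) (hb : b ∈ Kt k n t) :
    a * b ∈ Kt k n (s + t) := by
  obtain ⟨a, rfl⟩ := ha
  obtain ⟨b, rfl⟩ := hb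
  induction a using TensorProduct.induction_on with
  | zero => simp
  | add x y hx hy => rw [map_add, add_mul]; exact add_mem hx hy
  | tmul f w =>
    induction b using TensorProduct.induction_on with
    | zero => simp
    | add x y hx hy => rw [map_add, mul_add]; exact add_mem hx hy
    | tmul g v =>
      simp only [TensorProduct.map_tmul, Algebra.TensorProduct.tmul_mul_tmul]
      apply aux_tmul_mem
      change _ ∈ (LinearMap.range (ExteriorAlgebra.ι k : S2 k n →ₗ[k] _)) ^ (s + t)
      rw [pow_add]
      exact Submodule.mul_mem_mul w.2 v.2

theorem aux_prod_mem (L : List (Fin n)) (f : Fin n → KK k n) (g : Fin n → ℕ)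
    (h : ∀ i, f i ∈ Kt k n (g i)) : (L.map f).prod ∈ Kt k n (L.map g).sum := by
  induction L with
  | nil =>
    simp only [List.map_nil, List.prod_nil, List.sum_nil]
    rw [Algebra.TensorProduct.one_def]
    apply aux_tmul_mem
    change _ ∈ (LinearMap.range (ExteriorAlgebra.ι k : S2 k n →ₗ[k] _)) ^ 0
    rw [pow_zero]
    exact Submodule.one_le.1 le_rfl
  | cons a L ih =>
    simp only [List.map_cons, List.prod_cons, List.sum_cons]
    exact aux_mul_mem (h a) ih

theorem aux_Zel_mem (i : Fin n) : (Zel i : KK k n) ∈ Kt k n (i : ℕ) := by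
  unfold Zel
  refine sum_mem fun j _ => ?_
  refine zsmul_mem (aux_tmul_mem _ ?_) _
  exact ExteriorAlgebra.ιMulti_range k (i : ℕ) ⟨_, rfl⟩

abbrev auxW (k : Type) [Field k] (n : ℕ) := (Fin n × Fin n) → k

def auxE (p : Fin n × Fin n) : auxW k n := Pi.single p 1

def auxPhi : S2 k n →ₗ[k] auxW k n :=
  LinearMap.pi fun p =>
    if p.1 < p.2 then
      (lcoeff k (Finsupp.single p.1 1 + Finsupp.single p.2 1)) ∘ₗ (Submodule.subtype _)
    else 0

theorem auxPhi_diag (a : Fin n) : auxPhi (q a a : S2 k n) = 0 := by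
  funext p
  simp only [auxPhi, LinearMap.pi_apply]
  split_ifs with h
  · have : (X a * X a : S k n) = monomial (Finsupp.single a 1 + Finsupp.single a 1) 1 := by
      simp [X, monomial_mul]
    simp only [q, mulW, xv, LinearMap.comp_apply, Submodule.subtype_apply, lcoeff_apply, this,
      coeff_monomial]
    rw [if_neg]
    · rfl
    · intro e
      have h1 := DFunLike.congr_fun e p.1
      have h2 := DFunLike.congr_fun e p.2
      have := h.ne
      simp [Finsupp.single_apply] at h1 h2
      grind
  · rfl

theorem auxPhi_lt (a b : Fin n) (hab : a < b) : auxPhi (q a b : S2 k n) = auxE (a, b) := by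
  funext p
  simp only [auxPhi, LinearMap.pi_apply, auxE]
  have : (X a * X b : S k n) = monomial (Finsupp.single a 1 + Finsupp.single b 1) 1 := by
    simp [X, monomial_mul]
  by_cases hp : p = (a, b)
  · subst hp
    simp [hab, q, mulW, xv, this]
  · rw [Pi.single_eq_of_ne hp]
    split_ifs with h
    · simp only [q, mulW, xv, LinearMap.comp_apply, Submodule.subtype_apply, lcoeff_apply, this,
        coeff_monomial]
      rw [if_neg]
      intro e
      apply hp
      have h1 := DFunLike.congr_fun e p.1
      have h2 := DFunLike.congr_fun e p.2
      have h3 := DFunLike.congr_fun e a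
      have h4 := DFunLike.congr_fun e b
      have := h.ne
      have := hab.ne
      simp [Finsupp.single_apply] at h1 h2 h3 h4
      ext1 <;> grind
    · rfl

theorem aux_contract (d : Module.Dual k (auxW k n)) (L : List (auxW k n))
    (h : ∀ v ∈ L, d v = 0) :
    CliffordAlgebra.contractLeft (Q := (0 : QuadraticForm k (auxW k n))) d
      (L.map (ExteriorAlgebra.ι k)).prod = 0 := by
  induction L with
  | nil => simp
  | cons a L ih =>
    simp only [List.map_cons, List.prod_cons]
    erw [CliffordAlgebra.contractLeft_ι_mul]
    rw [ih (fun v hv => h v (by simp [hv])), h a (by simp)]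
    simp

theorem aux_ne_zero (L : List (Fin n × Fin n)) (hL : L.Nodup) :
    (L.map (fun p => ExteriorAlgebra.ι k (auxE p : auxW k n))).prod ≠ 0 := by
  induction L with
  | nil => simp
  | cons a L ih =>
    rw [List.nodup_cons] at hL
    intro h0
    apply ih hL.2
    have hc := aux_contract (k := k) (n := n) (LinearMap.proj a) (L.map auxE) (by
      intro v hv
      obtain ⟨p, hp, rfl⟩ := List.mem_map.1 hv
      have : a ≠ p := fun e => hL.1 (e ▸ hp)
      simp [auxE, this])
    rw [List.map_map] at hc
    have h1 := congrArg (CliffordAlgebra.contractLeft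
      (Q := (0 : QuadraticForm k (auxW k n))) (LinearMap.proj a)) h0
    simp only [List.map_cons, List.prod_cons] at h1
    erw [CliffordAlgebra.contractLeft_ι_mul] at h1
    erw [hc] at h1
    simpa [auxE] using h1

theorem aux_comm (x : S k n) (y : ExteriorAlgebra k (S2 k n)) :
    Commute (((Algebra.ofId k (ExteriorAlgebra k (auxW k n))).comp
      (aeval (fun _ => (1 : k)))) x) (ExteriorAlgebra.map auxPhi y) :=
  Algebra.commutes (A := ExteriorAlgebra k (auxW k n)) (aeval (fun _ => (1 : k)) x) _

def auxHom : KK k n →ₐ[k] ExteriorAlgebra k (auxW k n) :=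
  Algebra.TensorProduct.lift ((Algebra.ofId k _).comp (aeval (fun _ => (1 : k))))
    (ExteriorAlgebra.map auxPhi) aux_comm

theorem auxHom_tmul (i : Fin n) (w : ExteriorAlgebra k (S2 k n)) :
    auxHom (k := k) (n := n) ((X i : S k n) ⊗ₜ[k] w) = ExteriorAlgebra.map auxPhi w := by
  unfold auxHom
  rw [Algebra.TensorProduct.lift_tmul]
  simp

def auxList (i : Fin n) : List (Fin n × Fin n) :=
  List.ofFn (fun l : Fin (i : ℕ) => (Fin.castLE i.isLt.le l, i))

theorem auxHom_Zel (i : Fin n) : auxHom (k := k) (n := n) (Zel i : KK k n) =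
    ((-1 : ℤ) ^ (i : ℕ)) •
      ((auxList i).map (fun p => ExteriorAlgebra.ι k (auxE p : auxW k n))).prod := by
  unfold Zel
  rw [map_sum, Finset.sum_eq_single (Fin.last (i : ℕ))]
  · rw [map_zsmul]
    congr 1
    rw [auxHom_tmul, ExteriorAlgebra.map_apply_ιMulti, ExteriorAlgebra.ιMulti_apply, auxList,
      List.map_ofFn]
    congr 2
    funext l
    simp only [Function.comp_apply, Fin.succAbove_last]
    rw [← auxPhi_lt]
    · rfl
    · exact l.2
  · intro j _ hj
    rw [map_zsmul]
    obtain ⟨l, hl⟩ := Fin.exists_succAbove_eq (x := Fin.last (i : ℕ)) (y := j) hj.symm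
    simp only [auxHom_tmul, ExteriorAlgebra.map_apply_ιMulti]
    rw [AlternatingMap.map_coord_zero _ l, smul_zero]
    simp only [Function.comp_apply, hl]
    exact auxPhi_diag i
  · simp

theorem auxHom_prod (L : List (Fin n)) :
    ∃ e : ℕ, auxHom (k := k) (n := n) ((L.map (fun i => (Zel i : KK k n))).prod) =
      ((-1 : ℤ) ^ e) •
        ((L.flatMap auxList).map (fun p => ExteriorAlgebra.ι k (auxE p : auxW k n))).prod := by
  induction L with
  | nil => exact ⟨0, by simp⟩
  | cons a L ih =>
    obtain ⟨e, he⟩ := ih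
    refine ⟨a + e, ?_⟩
    simp only [List.map_cons, List.prod_cons, map_mul, he, auxHom_Zel, List.flatMap_cons,
      List.map_append, List.prod_append, pow_add, mul_smul, smul_mul_assoc, mul_smul_comm]
    rw [smul_comm]

/-- The product `Z_0 · Z_1 ⋯ Z_{n-1}` is a nonzero element of `K_N`,
where `N = n(n-1)/2`. -/
theorem full_product_nonzero (k : Type) [Field k] [CharZero k] (n : ℕ) :
    (((List.finRange n).map (fun i => (Zel i : KK k n))).prod ∈ Kt k n (n*(n-1)/2)) ∧
      ((List.finRange n).map (fun i => (Zel i : KK k n))).prod ≠ 0 := by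
  constructor
  · have h := aux_prod_mem (k := k) (List.finRange n) (fun i => Zel i) (fun i => (i : ℕ)) aux_Zel_mem
    have e : ((List.finRange n).map (fun i : Fin n => (i : ℕ))).sum = n * (n - 1) / 2 := by
      rw [← Finset.sum_range_id, ← Fin.sum_univ_eq_sum_range (fun i => i), Fin.sum_univ_def]
    rwa [e] at h
  · intro h0
    obtain ⟨e, he⟩ := auxHom_prod (k := k) (List.finRange n)
    rw [h0, map_zero] at he
    have hn : ((List.finRange n).flatMap auxList).Nodup := by
      rw [List.nodup_flatMap]
      constructor
      · intro i _
        rw [auxList, List.nodup_ofFn]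
        intro a b h
        simpa using h
      · refine (List.nodup_finRange n).imp ?_
        intro a b hab p hp hq
        simp only [auxList, List.mem_ofFn] at hp hq
        obtain ⟨_, rfl⟩ := hp
        obtain ⟨_, h⟩ := hq
        exact hab (congrArg Prod.snd h).symm
    have := aux_ne_zero (k := k) _ hn
    rcases neg_one_pow_eq_or ℤ e with h | h <;> rw [h] at he <;> simp at he <;>
      first | exact this he | exact this he.symm

end
end

section
/- The product Z_0 · Z_1 · ⋯ · Z_{n-1} ∈ K_N, where N = n(n-1)/2, is not a Koszul boundary: it does not lie in the image of the differential d_{N+1} : K_{N+1} → K_N. -/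
set_option maxHeartbeats 1000000
set_option synthInstance.maxHeartbeats 400000

open scoped TensorProduct
open MvPolynomial

noncomputable section

variable (k : Type) [Field k] (n : ℕ)

variable {k n}

variable (k n)

variable {k n}

namespace PF

section gen
variable {k B W : Type} [Field k] [CommRing B] [Algebra k B] [AddCommGroup W] [Module k W]

abbrev T (k B W : Type) [Field k] [CommRing B] [Algebra k B] [AddCommGroup W] [Module k W] :=
  B ⊗[k] ExteriorAlgebra k W

def ee (k B : Type) {W : Type} [Field k] [CommRing B] [Algebra k B] [AddCommGroup W] [Module k W]
    (w : W) : T k B W := (1 : B) ⊗ₜ[k] ExteriorAlgebra.ι k w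

def mm (k B : Type) {W : Type} [Field k] [CommRing B] [Algebra k B] [AddCommGroup W] [Module k W]
    {t : ℕ} (m : Fin t → W) : T k B W := (1 : B) ⊗ₜ[k] ExteriorAlgebra.ιMulti k t m

lemma mm_zero (m : Fin 0 → W) : mm k B m = 1 := by
  simp [mm, Algebra.TensorProduct.one_def]

lemma mm_succ {t : ℕ} (m : Fin (t+1) → W) :
    mm k B m = ee k B (m 0) * mm k B (fun i => m i.succ) := by
  simp only [mm, ee, ExteriorAlgebra.ιMulti_succ_apply, Algebra.TensorProduct.tmul_mul_tmul,
    one_mul]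
  rfl

lemma ee_sq (w : W) : ee k B w * ee k B w = 0 := by
  simp [ee, Algebra.TensorProduct.tmul_mul_tmul]

lemma ee_add (w w' : W) : ee k B (w + w') = ee k B w + ee k B w' := by
  simp [ee, TensorProduct.tmul_add]

lemma ee_swap (w w' : W) : ee k B w * ee k B w' = - (ee k B w' * ee k B w) := by
  have h := ExteriorAlgebra.ι_add_mul_swap (R := k) w w'
  rw [eq_neg_iff_add_eq_zero]
  simp only [ee, Algebra.TensorProduct.tmul_mul_tmul, ← TensorProduct.tmul_add, h,
    TensorProduct.tmul_zero]

/-- supercommutation with degree-one elements -/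
def SC (e : ℕ) (x : T k B W) : Prop :=
  ∀ w : W, ee k B w * x = (-1 : ℤ)^e • (x * ee k B w)

lemma SC_one : SC 0 (1 : T k B W) := by intro w; simp
lemma SC_ee (w : W) : SC 1 (ee k B w) := by
  intro w'; rw [ee_swap]; simp
lemma SC_mul {e f : ℕ} {x y : T k B W} (hx : SC e x) (hy : SC f y) : SC (e+f) (x*y) := by
  intro w
  rw [← mul_assoc, hx w, smul_mul_assoc, mul_assoc, hy w, mul_smul_comm, smul_smul, pow_add,
    mul_assoc]
lemma SC_smul {e : ℕ} {x : T k B W} (hx : SC e x) (b : B) : SC e (b • x) := by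
  intro w
  rw [mul_smul_comm, hx w, smul_mul_assoc, smul_comm]
lemma SC_zsmul {e : ℕ} {x : T k B W} (hx : SC e x) (b : ℤ) : SC e (b • x) := by
  intro w
  rw [mul_smul_comm, hx w, smul_mul_assoc, smul_comm]
lemma SC_sum {e : ℕ} {ι : Type} (s : Finset ι) {x : ι → T k B W} (hx : ∀ i ∈ s, SC e (x i)) :
    SC e (∑ i ∈ s, x i) := by
  intro w
  rw [Finset.mul_sum, Finset.sum_mul, Finset.smul_sum]
  exact Finset.sum_congr rfl (fun i hi => hx i hi w)
lemma SC_mm {t : ℕ} (m : Fin t → W) : SC t (mm k B m) := by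
  induction t with
  | zero => rw [mm_zero]; exact SC_one
  | succ t ih => rw [mm_succ]; have h := SC_mul (SC_ee (k := k) (B := B) (m 0)) (ih (fun i => m i.succ)); rw [add_comm 1 t] at h; exact h

lemma ee_mul_mm_self {t : ℕ} (m : Fin t → W) (i : Fin t) : ee k B (m i) * mm k B m = 0 := by
  induction t with
  | zero => exact i.elim0
  | succ t ih =>
    rw [mm_succ]
    refine Fin.cases ?_ (fun i => ?_) i
    · rw [← mul_assoc, ee_sq, zero_mul]
    · rw [← mul_assoc, ee_swap, neg_mul, mul_assoc, ih (fun i => m i.succ) i, mul_zero, neg_zero]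

variable [Module.Finite k W]

def ct (θ : W →ₗ[k] B) : T k B W →ₗ[B] T k B W :=
  ∑ a, θ (Module.finBasis k W a) •
    (LinearMap.baseChange B (CliffordAlgebra.contractLeft (Q := (0 : QuadraticForm k W))
      ((Module.finBasis k W).coord a)))

lemma ct_one (θ : W →ₗ[k] B) : ct θ (1 : T k B W) = 0 := by
  simp only [ct, Algebra.TensorProduct.one_def, LinearMap.sum_apply, LinearMap.smul_apply,
    LinearMap.baseChange_tmul]
  refine Finset.sum_eq_zero (fun a _ => ?_)
  have := CliffordAlgebra.contractLeft_one (Q := (0 : QuadraticForm k W)) ((Module.finBasis k W).coord a)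
  erw [this]
  simp

lemma ct_ee_mul (θ : W →ₗ[k] B) (w : W) (t : T k B W) :
    ct θ (ee k B w * t) = θ w • t - ee k B w * ct θ t := by
  induction t using TensorProduct.induction_on with
  | zero => simp
  | add x y hx hy => rw [mul_add, map_add, hx, hy, map_add, smul_add, mul_add]; abel
  | tmul b ω =>
    have key : ∀ a, (CliffordAlgebra.contractLeft (Q := (0 : QuadraticForm k W))
      ((Module.finBasis k W).coord a)) (ExteriorAlgebra.ι k w * ω) =
        ((Module.finBasis k W).coord a w) • ω - ExteriorAlgebra.ι k w *
        (CliffordAlgebra.contractLeft (Q := (0 : QuadraticForm k W))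
      ((Module.finBasis k W).coord a)) ω := fun a => CliffordAlgebra.contractLeft_ι_mul _ _ _
    simp only [ct, ee, LinearMap.sum_apply, LinearMap.smul_apply, Algebra.TensorProduct.tmul_mul_tmul,
      LinearMap.baseChange_tmul, one_mul]
    have h1 : θ w = ∑ a, ((Module.finBasis k W).coord a w) • θ (Module.finBasis k W a) := by
      have h := congrArg θ ((Module.finBasis k W).sum_repr w)
      rw [map_sum] at h
      rw [← h]
      simp
    rw [h1, Finset.sum_smul, Finset.mul_sum, ← Finset.sum_sub_distrib]
    refine Finset.sum_congr rfl (fun a _ => ?_)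
    erw [key a]
    rw [TensorProduct.tmul_sub, smul_sub, TensorProduct.tmul_smul, smul_assoc, smul_comm]
    congr 1
    rw [mul_smul_comm, Algebra.TensorProduct.tmul_mul_tmul, one_mul]

lemma ct_mm_mul (θ : W →ₗ[k] B) {t : ℕ} (m : Fin (t+1) → W) (Y : T k B W) :
    ct θ (mm k B m * Y) = ∑ j : Fin (t+1), (-1 : ℤ)^(j:ℕ) •
      (θ (m j) • (mm k B (fun l => m (j.succAbove l)) * Y))
      + (-1 : ℤ)^(t+1) • (mm k B m * ct θ Y) := by
  induction t with
  | zero => 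
    rw [mm_succ, mm_zero, mul_one, ct_ee_mul]
    simp [mm_zero, sub_eq_add_neg]
  | succ t ih =>
    rw [mm_succ, mul_assoc, ct_ee_mul, ih, Fin.sum_univ_succ (n := t+1)]
    have : ∀ j : Fin (t+1), mm k B (fun l => m (j.succ.succAbove l)) =
        ee k B (m 0) * mm k B (fun l => m (j.succAbove l).succ) := by
      intro j; rw [mm_succ]; simp
    simp only [this]
    simp only [Fin.val_zero, pow_zero, one_smul, Fin.zero_succAbove, mul_add, Finset.mul_sum,
      Fin.val_succ, pow_succ _ (_ + 1), pow_succ, mul_smul_comm, mul_assoc, mul_neg, mul_one,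
      neg_smul, Finset.sum_neg_distrib]
    abel

end gen
section lamsec
variable {k : Type} [Field k] {n : ℕ}

abbrev BB (k : Type) [Field k] (n : ℕ) := MvPolynomial (Fin n ⊕ Fin n) k

def wtf (s : (Fin n ⊕ Fin n) →₀ ℕ) : ℕ :=
  if ∀ i, s (Sum.inl i) = s (Sum.inr i) then ∏ i, (s (Sum.inl i)).factorial else 0

def lam (k : Type) [Field k] (n : ℕ) : BB k n →ₗ[k] k :=
  (basisMonomials (Fin n ⊕ Fin n) k).constr k (fun s => (wtf s : k))

lemma lam_monomial (s : (Fin n ⊕ Fin n) →₀ ℕ) (a : k) : lam k n (monomial s a) = a * wtf s := by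
  have h : (monomial s a : BB k n) = a • (basisMonomials (Fin n ⊕ Fin n) k s) := by
    rw [coe_basisMonomials, smul_monomial, smul_eq_mul, mul_one]
  rw [h, map_smul, lam, Module.Basis.constr_basis, smul_eq_mul]

lemma wtf_step (s : (Fin n ⊕ Fin n) →₀ ℕ) (i : Fin n) :
    wtf (Finsupp.single (Sum.inl i) 1 + s) =
      s (Sum.inr i) * wtf (s - Finsupp.single (Sum.inr i) 1) := by
  classical
  rcases Nat.eq_zero_or_pos (s (Sum.inr i)) with h0 | hpos
  · rw [h0, zero_mul, wtf, if_neg]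
    intro h
    have := h i
    simp [h0] at this
  · set u : (Fin n ⊕ Fin n) →₀ ℕ := Finsupp.single (Sum.inl i) 1 + s with hu
    set v : (Fin n ⊕ Fin n) →₀ ℕ := s - Finsupp.single (Sum.inr i) 1 with hv
    have u1 : ∀ j, u (Sum.inl j) = (if i = j then 1 else 0) + s (Sum.inl j) := by
      intro j; simp [hu, Finsupp.single_apply]
    have u2 : ∀ j, u (Sum.inr j) = s (Sum.inr j) := by
      intro j; simp [hu]
    have v1 : ∀ j, v (Sum.inl j) = s (Sum.inl j) := by
      intro j; simp [hv]
    have v2 : ∀ j, v (Sum.inr j) = s (Sum.inr j) - (if i = j then 1 else 0) := by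
      intro j; simp [hv, Finsupp.single_apply]
    have hiff : (∀ j, u (Sum.inl j) = u (Sum.inr j)) ↔ (∀ j, v (Sum.inl j) = v (Sum.inr j)) := by
      refine forall_congr' (fun j => ?_)
      rw [u1, u2, v1, v2]
      by_cases hj : i = j
      · subst hj
        simp
        omega
      · simp [hj]
    unfold wtf
    by_cases hc : ∀ j, v (Sum.inl j) = v (Sum.inr j)
    · rw [if_pos hc, if_pos (hiff.2 hc)]
      have hi := hiff.2 hc i
      rw [u1, u2] at hi
      simp only [if_true] at hi
      rw [← Finset.mul_prod_erase _ _ (Finset.mem_univ i),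
        ← Finset.mul_prod_erase (a := i) (f := fun j => (v (Sum.inl j)).factorial) _ (Finset.mem_univ i)]
      have h2 : ∀ j ∈ Finset.univ.erase i, (u (Sum.inl j)).factorial
          = (v (Sum.inl j)).factorial := by
        intro j hj
        have : i ≠ j := (Finset.ne_of_mem_erase hj).symm
        rw [u1, v1]
        simp [this]
      rw [Finset.prod_congr rfl h2, ← mul_assoc]
      congr 1
      rw [u1, v1, if_pos rfl, ← hi, add_comm 1, Nat.factorial_succ]
    · rw [if_neg hc, if_neg (fun h => hc (hiff.1 h)), mul_zero]

lemma lam_X_mul (i : Fin n) (F : BB k n) :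
    lam k n (X (Sum.inl i) * F) = lam k n (pderiv (Sum.inr i) F) := by
  induction F using MvPolynomial.induction_on' with
  | add p q hp hq => rw [mul_add, map_add, hp, hq, map_add, map_add]
  | monomial s a =>
    rw [pderiv_monomial, lam_monomial, X, monomial_mul, lam_monomial, wtf_step]
    push_cast
    ring

def tau (k : Type) [Field k] (n : ℕ) : MvPolynomial (Fin n) ℕ →+* BB k n :=
  eval₂Hom (Nat.castRingHom _) (fun j => X (Sum.inl j) * X (Sum.inr j))

lemma lam_tau_monomial (a : Fin n →₀ ℕ) (c : ℕ) :
    lam k n (tau k n (monomial a c)) = ((c * ∏ j, (a j).factorial : ℕ) : k) := by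
  have h : tau k n (monomial a c) =
      monomial (Finsupp.equivFunOnFinite.symm (Sum.elim a a)) (c : k) := by
    rw [monomial_eq (a := (c : k)), Finsupp.prod_fintype _ _ (by simp), Fintype.prod_sum_type, tau,
      coe_eval₂Hom, eval₂_monomial, Finsupp.prod_fintype _ _ (by simp)]
    simp [mul_pow, Finset.prod_mul_distrib]
  rw [h, lam_monomial]
  simp [wtf]

lemma lam_tau_ne [CharZero k] (h : MvPolynomial (Fin n) ℕ) (hh : h ≠ 0) :
    lam k n (tau k n h) ≠ 0 := by
  have key : lam k n (tau k n h) =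
      ((∑ a ∈ h.support, coeff a h * ∏ j, (a j).factorial : ℕ) : k) := by
    conv_lhs => rw [← support_sum_monomial_coeff h]
    rw [map_sum, map_sum, Nat.cast_sum]
    exact Finset.sum_congr rfl (fun a _ => lam_tau_monomial _ _)
  rw [key, Nat.cast_ne_zero]
  obtain ⟨a, ha⟩ := support_nonempty.2 hh
  apply ne_of_gt
  refine Finset.sum_pos' (fun _ _ => Nat.zero_le _) ⟨a, ha, ?_⟩
  refine Nat.mul_pos (Nat.pos_of_ne_zero (mem_support_iff.1 ha)) ?_
  exact Finset.prod_pos (fun j _ => Nat.factorial_pos _)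

def sx (k : Type) [Field k] {n : ℕ} (i : Fin n) : BB k n :=
  ∑ j : Fin ((i:ℕ)+1), X (Sum.inl (Fin.castLE i.isLt j)) * X (Sum.inr (Fin.castLE i.isLt j))

lemma lam_prod_ne [CharZero k] : lam k n (((List.finRange n).map (sx k)).prod) ≠ 0 := by
  have h : ((List.finRange n).map (sx k)).prod = tau k n
    (((List.finRange n).map (fun i : Fin n => ∑ j : Fin ((i:ℕ)+1), X (Fin.castLE i.isLt j))).prod) := by
    rw [map_list_prod, List.map_map]
    congr 2
    funext i
    simp [sx, tau]
  rw [h]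
  apply lam_tau_ne
  intro h0
  have h1 := congrArg (eval (fun _ => (1:ℕ))) h0
  rw [map_list_prod, List.map_map, map_zero, List.prod_eq_zero_iff] at h1
  simp at h1

end lamsec
section conc
variable {k : Type} [Field k] {n : ℕ}

lemma q_coe (i j : Fin n) : ((q i j : S2 k n) : S k n) = X i * X j := rfl

lemma q_comm (i j : Fin n) : (q i j : S2 k n) = q j i := by
  apply Subtype.ext
  rw [q_coe, q_coe, mul_comm]

def qq (k : Type) [Field k] (n : ℕ) (p : Σ i : Fin n, Fin ((i:ℕ)+1)) : S2 k n :=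
  q (Fin.castLE p.1.isLt p.2) p.1

lemma q_mem_range (i j : Fin n) : (q i j : S2 k n) ∈ Set.range (qq k n) := by
  rcases le_total i j with h | h
  · exact ⟨⟨j, ⟨i, Nat.lt_succ_of_le h⟩⟩, rfl⟩
  · exact ⟨⟨i, ⟨j, Nat.lt_succ_of_le h⟩⟩, q_comm _ _⟩

lemma span_qq : Submodule.span k (Set.range (qq k n)) = ⊤ := by
  rw [eq_top_iff]
  rintro ⟨f, hf⟩ -
  have h1 : f ∈ (Submodule.span k (Set.range (qq k n))).map (S2 k n).subtype := by
    rw [← support_sum_monomial_coeff f]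
    refine Submodule.sum_mem _ (fun s hs => ?_)
    have hdeg : s.degree = 2 := by
      have h2 := (mem_homogeneousSubmodule 2 f).1 hf (mem_support_iff.1 hs)
      rw [Finsupp.degree_eq_weight_one]; exact h2
    have hcard : Multiset.card (Finsupp.toMultiset s) = 2 := by
      rw [Finsupp.card_toMultiset, ← hdeg]; rfl
    obtain ⟨a, b, hab⟩ := Multiset.card_eq_two.1 hcard
    have hs2 : s = Finsupp.single a 1 + Finsupp.single b 1 := by
      rw [← Finsupp.toMultiset_toFinsupp s, hab, Multiset.insert_eq_cons,
        ← Multiset.singleton_add, map_add, Multiset.toFinsupp_singleton,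
        Multiset.toFinsupp_singleton]
    have h3 : monomial s (coeff s f) = coeff s f • ((q a b : S2 k n) : S k n) := by
      rw [q_coe, hs2, X, X, monomial_mul, smul_monomial]; simp
    rw [h3]
    refine Submodule.smul_mem _ _ (Submodule.mem_map.2 ⟨q a b, ?_, rfl⟩)
    exact Submodule.subset_span (q_mem_range a b)
  obtain ⟨y, hy, hyf⟩ := Submodule.mem_map.1 h1
  have : y = ⟨f, hf⟩ := Subtype.ext hyf
  rw [← this]; exact hy

instance finS2 : Module.Finite k (S2 k n) :=
  ⟨⟨(Set.finite_range (qq k n)).toFinset, by simpa using span_qq⟩⟩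

lemma finrank_S2_le : Module.finrank k (S2 k n) ≤ n*(n-1)/2 + n := by
  have h := finrank_range_le_card (R := k) (qq k n)
  rw [Set.finrank, span_qq, finrank_top] at h
  refine h.trans (le_of_eq ?_)
  rw [Fintype.card_sigma]
  simp only [Fintype.card_fin]
  rw [Finset.sum_add_distrib, Fin.sum_univ_eq_sum_range (fun i => i) n, Finset.sum_range_id]
  simp

abbrev TT (k : Type) [Field k] (n : ℕ) := T k (BB k n) (S2 k n)

abbrev EE (k : Type) [Field k] (n : ℕ) := ExteriorAlgebra k (S2 k n)

def wv (k : Type) [Field k] {n : ℕ} (i j : Fin n) : TT k n := ee k (BB k n) (q i j)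

lemma wv_comm (i j : Fin n) : wv k i j = wv k j i := by rw [wv, q_comm]; rfl

def V (k : Type) [Field k] {n : ℕ} (i : Fin n) : TT k n :=
  ∑ j, (X (Sum.inr j) : BB k n) • wv k j i

def PV (k : Type) [Field k] {n : ℕ} (L : List (Fin n)) : TT k n := (L.map (V k)).prod

lemma PV_nil : PV k ([] : List (Fin n)) = 1 := rfl
lemma PV_cons (l : Fin n) (L) : PV k (l :: L) = V k l * PV k L := by simp [PV]

def lamE (k : Type) [Field k] (n : ℕ) : TT k n →ₗ[k] EE k n :=
  (TensorProduct.lid k (EE k n)).toLinearMap ∘ₗ LinearMap.rTensor (EE k n) (lam k n)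

lemma lamE_tmul (b : BB k n) (ω : EE k n) : lamE k n (b ⊗ₜ ω) = lam k n b • ω := by
  simp [lamE]

def dd (i : Fin n) : TT k n →ₗ[k] TT k n :=
  LinearMap.rTensor (EE k n) (pderiv (Sum.inr i : Fin n ⊕ Fin n)).toLinearMap

lemma dd_tmul (i : Fin n) (b : BB k n) (ω : EE k n) :
    dd i (b ⊗ₜ ω) = (pderiv (Sum.inr i) b) ⊗ₜ[k] ω := rfl

def on (k : Type) [Field k] {n : ℕ} (ω : EE k n) : TT k n := (1 : BB k n) ⊗ₜ ω

lemma dd_smul (i : Fin n) (b : BB k n) (t : TT k n) :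
    dd i (b • t) = pderiv (Sum.inr i) b • t + b • dd i t := by
  induction t using TensorProduct.induction_on with
  | zero => simp
  | add x y hx hy => rw [smul_add, map_add, hx, hy, map_add, smul_add, smul_add]; abel
  | tmul c ω =>
    rw [TensorProduct.smul_tmul', dd_tmul, dd_tmul, TensorProduct.smul_tmul',
      TensorProduct.smul_tmul', ← TensorProduct.add_tmul]
    simp only [smul_eq_mul, pderiv_mul]

lemma dd_on_mul (i : Fin n) (ω : EE k n) (t : TT k n) : dd i (on k ω * t) = on k ω * dd i t := by
  induction t using TensorProduct.induction_on with
  | zero => simp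
  | add x y hx hy => rw [mul_add, map_add, hx, hy, map_add, mul_add]
  | tmul c η =>
    rw [dd_tmul, on, Algebra.TensorProduct.tmul_mul_tmul, Algebra.TensorProduct.tmul_mul_tmul,
      dd_tmul, one_mul, one_mul]

lemma lamE_X_smul (i : Fin n) (t : TT k n) :
    lamE k n ((X (Sum.inl i) : BB k n) • t) = lamE k n (dd i t) := by
  induction t using TensorProduct.induction_on with
  | zero => simp
  | add x y hx hy => rw [smul_add, map_add, hx, hy, map_add, map_add]
  | tmul c η =>
    rw [dd_tmul, TensorProduct.smul_tmul', lamE_tmul, lamE_tmul, smul_eq_mul, lam_X_mul]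

lemma wv_eq_on (i j : Fin n) : wv k i j = on k (ExteriorAlgebra.ι k (q i j)) := rfl

lemma on_mul (ω η : EE k n) : on k (ω * η) = on k ω * on k η := by
  simp [on, Algebra.TensorProduct.tmul_mul_tmul]

def G (u : Fin n → BB k n) : List (Fin n) → TT k n
  | [] => 0
  | l :: L => u l • PV k L - V k l * G u L

lemma G_add (u v : Fin n → BB k n) (L) : G (u + v) L = G u L + G v L := by
  induction L with
  | nil => simp [G]
  | cons l L ih => simp only [G, ih, Pi.add_apply, add_smul, mul_add]; abel

lemma G_smul (b : BB k n) (u : Fin n → BB k n) (L) : G (b • u) L = b • G u L := by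
  induction L with
  | nil => simp [G]
  | cons l L ih => simp only [G, ih, Pi.smul_apply, smul_sub, mul_smul_comm, smul_eq_mul, mul_smul]

lemma G_zero (L) : G (0 : Fin n → BB k n) L = 0 := by
  have := G_smul (0 : BB k n) 0 L
  simpa using this

lemma dd_V_mul (l i : Fin n) (t : TT k n) :
    dd l (V k i * t) = wv k l i * t + V k i * dd l t := by
  simp only [V, Finset.sum_mul, map_sum, smul_mul_assoc, dd_smul, Finset.sum_add_distrib,
    wv_eq_on, dd_on_mul]
  congr 1
  rw [Finset.sum_eq_single l]
  · simp
  · intro j _ hj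
    rw [pderiv_X_of_ne (by simpa using hj), zero_smul]
  · simp

lemma V_mul_wv (i a b : Fin n) : V k i * wv k a b = - (wv k a b * V k i) := by
  simp only [V, Finset.sum_mul, Finset.mul_sum, smul_mul_assoc, mul_smul_comm,
    ← Finset.sum_neg_distrib, ← smul_neg]
  refine Finset.sum_congr rfl (fun j _ => ?_)
  rw [wv, wv, ee_swap]

lemma dd_PV (l : Fin n) (L) :
    dd l (PV k L) = ∑ j, wv k j l * G (Pi.single j 1) L := by
  induction L with
  | nil =>
    simp only [PV_nil, G, mul_zero, Finset.sum_const_zero]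
    rw [Algebra.TensorProduct.one_def, dd_tmul]; simp
  | cons i L ih =>
    rw [PV_cons, dd_V_mul, ih]
    simp only [G, mul_sub, Finset.sum_sub_distrib]
    have h1 : ∑ j, wv k j l * ((Pi.single j 1 : Fin n → BB k n) i • PV k L) = wv k l i * PV k L := by
      rw [Finset.sum_eq_single i]
      · simp [wv_comm]
      · intro j _ hj
        simp [Pi.single_apply, hj.symm]
      · simp
    rw [h1, sub_eq_add_neg, ← Finset.sum_neg_distrib, Finset.mul_sum]
    congr 1
    refine Finset.sum_congr rfl (fun j _ => ?_)
    rw [← mul_assoc, ← mul_assoc, V_mul_wv, neg_mul]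

def xx (k : Type) [Field k] {n : ℕ} : Fin n → BB k n := fun i => X (Sum.inl i)
def dv (b : BB k n) : Fin n → BB k n := fun i => pderiv (Sum.inr i) b

lemma dv_mul_X (b : BB k n) (j : Fin n) :
    dv (b * X (Sum.inr j)) = (X (Sum.inr j) : BB k n) • dv b + b • (Pi.single j 1) := by
  funext i
  simp only [dv, pderiv_mul, Pi.add_apply, Pi.smul_apply, smul_eq_mul]
  by_cases h : i = j
  · subst h; simp [mul_comm]
  · rw [pderiv_X_of_ne (by simpa using fun h' => h h'.symm)]; simp [Pi.single_apply, h, mul_comm]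

lemma key_G (L : List (Fin n)) : ∀ (b : BB k n) (ω : EE k n),
    lamE k n (b • (on k ω * G (xx k) L)) = lamE k n (on k ω * G (dv b) L) := by
  induction L with
  | nil => intro b ω; simp [G]
  | cons l L ih =>
    intro b ω
    simp only [G, mul_sub, smul_sub, map_sub]
    have h1 : lamE k n (b • (on k ω * (xx k l • PV k L))) =
        lamE k n (on k ω * (dv b l • PV k L)) + lamE k n (b • (on k ω * dd l (PV k L))) := by
      rw [mul_smul_comm, smul_comm, xx, lamE_X_smul, dd_smul, map_add, dd_on_mul, mul_smul_comm]
      rfl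
    have h2 : lamE k n (b • (on k ω * (V k l * G (xx k) L))) =
        lamE k n (on k ω * (V k l * G (dv b) L)) +
          lamE k n (b • (on k ω * ∑ j, wv k j l * G (Pi.single j 1) L)) := by
      simp only [V, Finset.sum_mul, Finset.mul_sum, Finset.smul_sum, map_sum,
        ← Finset.sum_add_distrib]
      refine Finset.sum_congr rfl (fun j _ => ?_)
      rw [smul_mul_assoc, mul_smul_comm, smul_smul, wv_eq_on, ← mul_assoc, ← on_mul, ih,
        dv_mul_X, G_add, G_smul, G_smul, mul_add, map_add, smul_mul_assoc, mul_smul_comm,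
        mul_smul_comm, mul_smul_comm, on_mul, mul_assoc, mul_assoc]
    rw [h1, h2, dd_PV]
    abel

def emb (k : Type) [Field k] (n : ℕ) : S k n →ₐ[k] BB k n := rename Sum.inl

lemma dv_emb (f : S k n) : dv (emb k n f) = 0 := by
  funext i
  simp only [dv, Pi.zero_apply]
  apply pderiv_eq_zero_of_notMem_vars
  intro h
  have := vars_rename (Sum.inl : Fin n → Fin n ⊕ Fin n) f
  have h2 := this h
  simp at h2

def xc (k : Type) [Field k] (n : ℕ) : BB k n := ∑ j, X (Sum.inl j) * X (Sum.inr j)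

lemma dv_emb_xc (f : S k n) : dv (emb k n f * xc k n) = (emb k n f) • xx k := by
  funext i
  have h0 : pderiv (Sum.inr i) (emb k n f) = 0 := congrFun (dv_emb f) i
  have hx : pderiv (Sum.inr i) (xc k n) = X (Sum.inl i) := by
    rw [xc, map_sum, Finset.sum_eq_single i]
    · rw [pderiv_mul, pderiv_X_self, pderiv_X_of_ne (by simp)]; simp
    · intro j _ hj
      rw [pderiv_mul, pderiv_X_of_ne (by simp), pderiv_X_of_ne (by simpa using hj)]; simp
    · simp
  simp only [dv, pderiv_mul, h0, hx]
  simp [xx]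

lemma lamE_G_zero (L : List (Fin n)) (f : S k n) (ω : EE k n) :
    lamE k n ((emb k n f * xc k n) • (on k ω * G (xx k) L)) = 0 := by
  rw [key_G, dv_emb_xc, G_smul, mul_smul_comm, key_G, dv_emb, G_zero]
  simp

def th0 (k : Type) [Field k] (n : ℕ) : S2 k n →ₗ[k] BB k n :=
  (emb k n).toLinearMap ∘ₗ (S2 k n).subtype

lemma th0_q (i j : Fin n) : th0 k n (q i j) = X (Sum.inl i) * X (Sum.inl j) := by
  simp [th0, q_coe, emb]

lemma ct_PV (L : List (Fin n)) : ct (th0 k n) (PV k L) = xc k n • G (xx k) L := by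
  induction L with
  | nil => rw [PV_nil, ct_one]; simp [G]
  | cons l L ih =>
    rw [PV_cons, G]
    conv_lhs => rw [V]
    simp only [Finset.sum_mul, smul_mul_assoc, map_sum, map_smul, wv, ct_ee_mul, ih, th0_q,
      smul_sub, Finset.sum_sub_distrib]
    congr 1
    · rw [xc, xx, Finset.sum_smul]
      refine Finset.sum_congr rfl (fun j _ => ?_)
      simp only [smul_smul]
      congr 1
      ring
    · simp only [V, Finset.sum_mul, Finset.smul_sum, smul_mul_assoc, mul_smul_comm, wv]
      refine Finset.sum_congr rfl (fun j _ => ?_)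
      rw [smul_comm]

lemma PV_vanish (L : List (Fin n)) : ∀ (r : ℕ) (ω : EE k n), ω ∈ ⋀[k]^r (S2 k n) →
    Module.finrank k (S2 k n) < r + L.length → on k ω * PV k L = 0 := by
  induction L with
  | nil =>
    intro r ω hω hr
    have hz : ω = 0 := by
      rw [← ExteriorAlgebra.ιMulti_span_fixedDegree] at hω
      induction hω using Submodule.span_induction with
      | zero => rfl
      | add x y _ _ hx hy => rw [hx, hy, add_zero]
      | smul a x _ hx => rw [hx, smul_zero]
      | mem x hx =>
        obtain ⟨m, rfl⟩ := hx
        apply AlternatingMap.map_linearDependent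
        intro hli
        have := hli.fintype_card_le_finrank
        simp at this hr
        omega
    rw [hz, on, TensorProduct.tmul_zero, zero_mul]
  | cons l L ih =>
    intro r ω hω hr
    rw [PV_cons, V, Finset.sum_mul, Finset.mul_sum]
    refine Finset.sum_eq_zero (fun j _ => ?_)
    rw [smul_mul_assoc, mul_smul_comm, wv_eq_on, ← mul_assoc, ← on_mul, ih (r+1), smul_zero]
    · change ω * ExteriorAlgebra.ι k (q j l) ∈ (LinearMap.range (ExteriorAlgebra.ι k)) ^ (r+1)
      rw [pow_succ]
      exact Submodule.mul_mem_mul hω (LinearMap.mem_range_self _ _)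
    · simp at hr; omega

end conc
section fin
variable {k : Type} [Field k] {n : ℕ}

def Theta (k : Type) [Field k] (n : ℕ) : KK k n →ₐ[k] TT k n :=
  Algebra.TensorProduct.map (emb k n) (AlgHom.id k _)

lemma Theta_tmul (f : S k n) (ω : EE k n) : Theta k n (f ⊗ₜ ω) = emb k n f • on k ω := by
  simp [Theta, on, TensorProduct.smul_tmul']

lemma boundary_zero (D : ℕ → KK k n →ₗ[k] KK k n) (hD : IsKoszulDiff D) (t : ℕ)
    (L : List (Fin n)) (hL : Module.finrank k (S2 k n) < t + 1 + L.length)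
    (f : S k n) (m : Fin (t+1) → S2 k n) :
    lamE k n (Theta k n (D (t+1) (f ⊗ₜ[k] (ExteriorAlgebra.ιMulti k (t+1) m))) * PV k L) = 0 := by
  rw [hD.2 t f m]
  have h1 : on k (ExteriorAlgebra.ιMulti k (t+1) m) * PV k L = 0 :=
    PV_vanish L (t+1) _ (ExteriorAlgebra.ιMulti_range k (t+1) ⟨m, rfl⟩) hL
  have h2 := ct_mm_mul (th0 k n) m (PV k L)
  have h3 : mm k (BB k n) m * PV k L = 0 := h1
  rw [h3, map_zero, ct_PV] at h2
  have h4 := congrArg (fun z => emb k n f • z) (eq_neg_of_add_eq_zero_left h2.symm)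
  beta_reduce at h4
  have h5 : Theta k n (∑ j : Fin (t+1), ((-1:ℤ)^(j:ℕ)) •
          ((f * ((m j : S k n))) ⊗ₜ[k]
            (ExteriorAlgebra.ιMulti k t (fun l => m (j.succAbove l))))) * PV k L =
      emb k n f • ∑ j : Fin (t+1), (-1 : ℤ)^(j:ℕ) •
      (th0 k n (m j) • (mm k (BB k n) (fun l => m (j.succAbove l)) * PV k L)) := by
    rw [map_sum, Finset.sum_mul, Finset.smul_sum]
    refine Finset.sum_congr rfl (fun j _ => ?_)
    rw [map_zsmul, Theta_tmul, map_mul, smul_mul_assoc, smul_mul_assoc, mul_smul, smul_comm (emb k n f) ((-1:ℤ)^(j:ℕ))]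
    rfl
  rw [h5, h4, smul_neg, map_neg, smul_comm, map_zsmul, mul_smul_comm, ← mul_smul]
  have h6 := lamE_G_zero L f (ExteriorAlgebra.ιMulti k (t+1) m)
  have h7 : on k (ExteriorAlgebra.ιMulti k (t+1) m) = mm k (BB k n) m := rfl
  rw [h7] at h6
  rw [h6, smul_zero, neg_zero]

lemma boundary_zero' (D : ℕ → KK k n →ₗ[k] KK k n) (hD : IsKoszulDiff D) (t : ℕ)
    (L : List (Fin n)) (hL : Module.finrank k (S2 k n) < t + 1 + L.length)
    (z : KK k n) (hz : z ∈ Kt k n (t+1)) :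
    lamE k n (Theta k n (D (t+1) z) * PV k L) = 0 := by
  obtain ⟨y, rfl⟩ := hz
  induction y using TensorProduct.induction_on with
  | zero => simp
  | add x y hx hy => rw [map_add, map_add, map_add, add_mul, map_add, hx, hy, add_zero]
  | tmul f ω =>
    obtain ⟨ω, hω⟩ := ω
    rw [TensorProduct.map_tmul]
    simp only [LinearMap.id_coe, id_eq, Submodule.subtype_apply]
    rw [← ExteriorAlgebra.ιMulti_span_fixedDegree] at hω
    induction hω using Submodule.span_induction with
    | zero => simp
    | add x y _ _ hx hy =>
      rw [TensorProduct.tmul_add, map_add, map_add, add_mul, map_add, hx, hy, add_zero]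
    | smul a x _ hx =>
      rw [TensorProduct.tmul_smul, map_smul, map_smul, smul_mul_assoc, map_smul, hx, smul_zero]
    | mem x hx =>
      obtain ⟨m, rfl⟩ := hx
      exact boundary_zero D hD t L hL f m

lemma pair_inj {a b c d : Fin n} (hab : a ≤ b) (hcd : c ≤ d)
    (h : (Finsupp.single a 1 + Finsupp.single b 1 : Fin n →₀ ℕ) =
      Finsupp.single c 1 + Finsupp.single d 1) : a = c ∧ b = d := by
  have h' := (Finsupp.single_add_single_eq_single_add_single one_ne_zero one_ne_zero).1 h
  rcases h' with ⟨rfl, rfl⟩ | ⟨_, rfl, rfl⟩ | ⟨h1, _⟩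
  · exact ⟨rfl, rfl⟩
  · exact ⟨le_antisymm hab hcd, le_antisymm hcd hab⟩
  · omega

lemma q_coeff (a b : Fin n) (s : Fin n →₀ ℕ) : coeff s ((q a b : S2 k n) : S k n) =
    if Finsupp.single a 1 + Finsupp.single b 1 = s then 1 else 0 := by
  rw [q_coe, X, X, monomial_mul, coeff_monomial]
  simp

def cf (k : Type) [Field k] (s : Fin n →₀ ℕ) : S2 k n →ₗ[k] k :=
  (lcoeff k s) ∘ₗ (S2 k n).subtype

lemma cf_apply (s : Fin n →₀ ℕ) (w : S2 k n) : cf k s w = coeff s (w : S k n) := rfl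

def th (k : Type) [Field k] {n : ℕ} (i : Fin n) : S2 k n →ₗ[k] BB k n :=
  ∑ l : Fin n, (cf k (Finsupp.single l 1 + Finsupp.single i 1)).smulRight (X (Sum.inl l) : BB k n)

lemma th_q (i j : Fin n) : th k i (q j i) = X (Sum.inl j) := by
  simp only [th, LinearMap.sum_apply, LinearMap.smulRight_apply, cf_apply, q_coeff]
  rw [Finset.sum_eq_single j]
  · simp
  · intro l _ hl
    rw [if_neg, zero_smul]
    intro h
    have := add_right_cancel h
    exact hl (Finsupp.single_left_injective one_ne_zero this).symm
  · simp

def beta (k : Type) [Field k] {n : ℕ} (i : Fin n) : TT k n :=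
  mm k (BB k n) (fun l : Fin ((i:ℕ)+1) => (q (Fin.castLE i.isLt l) i : S2 k n))

def zeta (k : Type) [Field k] {n : ℕ} (i : Fin n) : TT k n := Theta k n (Zel i)

lemma zeta_eq (i : Fin n) : zeta k i = ∑ j : Fin ((i:ℕ)+1), (-1:ℤ)^(j:ℕ) •
    ((X (Sum.inl (Fin.castLE i.isLt j)) : BB k n) •
      mm k (BB k n) (fun l : Fin (i:ℕ) => (q (Fin.castLE i.isLt (j.succAbove l)) i : S2 k n))) := by
  rw [zeta, Zel, map_sum]
  refine Finset.sum_congr rfl (fun j _ => ?_)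
  rw [map_zsmul, Theta_tmul, emb, rename_X]
  rfl

lemma zeta_ct (i : Fin n) : ct (th k i) (beta k i) = zeta k i := by
  have h := ct_mm_mul (th k i) (fun l : Fin ((i:ℕ)+1) => (q (Fin.castLE i.isLt l) i : S2 k n)) 1
  rw [mul_one, ct_one, mul_zero, smul_zero, add_zero] at h
  rw [beta, h, zeta_eq]
  refine Finset.sum_congr rfl (fun j _ => ?_)
  rw [th_q, mul_one]

lemma SC_zeta (i : Fin n) : SC (i:ℕ) (zeta k i) := by
  rw [zeta_eq]
  exact SC_sum _ (fun j _ => SC_zsmul (SC_smul (SC_mm _) _) _)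

def Vt (k : Type) [Field k] {n : ℕ} (i : Fin n) : TT k n :=
  ∑ j : Fin ((i:ℕ)+1), (X (Sum.inr (Fin.castLE i.isLt j)) : BB k n) • wv k (Fin.castLE i.isLt j) i

lemma wv_beta {i j : Fin n} (h : j ≤ i) : wv k j i * beta k i = 0 :=
  ee_mul_mm_self (k := k) (B := BB k n)
    (fun l : Fin ((i:ℕ)+1) => (q (Fin.castLE i.isLt l) i : S2 k n)) ⟨j, Nat.lt_succ_of_le h⟩

lemma castLE_le (i : Fin n) (j : Fin ((i:ℕ)+1)) : Fin.castLE i.isLt j ≤ i :=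
  Nat.le_of_lt_succ j.isLt

lemma Vt_zeta (i : Fin n) : Vt k i * zeta k i = sx k i • beta k i := by
  have h0 : Vt k i * beta k i = 0 := by
    rw [Vt, Finset.sum_mul]
    refine Finset.sum_eq_zero (fun j _ => ?_)
    rw [smul_mul_assoc, wv_beta (castLE_le i j), smul_zero]
  have h1 := congrArg (ct (th k i)) h0
  rw [map_zero, Vt] at h1
  simp only [Finset.sum_mul, smul_mul_assoc, map_sum, map_smul, wv, ct_ee_mul, th_q, zeta_ct,
    smul_sub, Finset.sum_sub_distrib] at h1
  rw [sub_eq_zero] at h1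
  rw [Vt, Finset.sum_mul]
  simp only [smul_mul_assoc, wv]
  rw [← h1, sx, Finset.sum_smul]
  refine Finset.sum_congr rfl (fun j _ => ?_)
  rw [smul_smul, mul_comm]

lemma zeta_Vt (i : Fin n) : zeta k i * Vt k i = (-1:ℤ)^(i:ℕ) • sx k i • beta k i := by
  rw [← Vt_zeta, Vt, Finset.mul_sum, Finset.sum_mul, Finset.smul_sum]
  refine Finset.sum_congr rfl (fun j _ => ?_)
  rw [mul_smul_comm, smul_mul_assoc, wv, SC_zeta i, smul_comm (X _ : BB k n), smul_smul, ← mul_pow]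
  simp

lemma V_eq (i : Fin n) : V k i = Vt k i +
    ∑ j ∈ Finset.univ.filter (fun j => i < j), (X (Sum.inr j) : BB k n) • wv k j i := by
  rw [V, ← Finset.sum_filter_not_add_sum_filter _ (fun j => i < j)]
  congr 1
  rw [Vt]
  symm
  refine Finset.sum_bij (fun j _ => Fin.castLE i.isLt j) ?_ ?_ ?_ ?_
  · intro j _; simpa using castLE_le i j
  · intro a _ b _ h; exact Fin.castLE_injective _ h
  · intro b hb
    simp at hb
    exact ⟨⟨b, Nat.lt_succ_of_le hb⟩, Finset.mem_univ _, rfl⟩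
  · intro j _; rfl

lemma SC_V (i : Fin n) : SC 1 (V k i) := SC_sum _ (fun _ _ => SC_smul (SC_ee _) _)

lemma SC_PV (L : List (Fin n)) : SC L.length (PV k L) := by
  induction L with
  | nil => exact SC_one
  | cons l L ih =>
    rw [PV_cons]
    have h := SC_mul (SC_V (k := k) l) ih
    rw [add_comm] at h
    exact h

lemma mm_comm {e t : ℕ} {x : TT k n} (hx : SC e x) (m : Fin t → S2 k n) :
    mm k (BB k n) m * x = (-1:ℤ)^(e*t) • (x * mm k (BB k n) m) := by
  induction t with
  | zero => simp [mm_zero]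
  | succ t ih =>
    rw [mm_succ, mul_assoc, ih, mul_smul_comm, ← mul_assoc, hx, smul_mul_assoc, smul_smul,
      mul_assoc, Nat.mul_succ, pow_add]

def prodN {M : Type} [Monoid M] (f : Fin n → M) : ℕ → M
  | 0 => 1
  | m+1 => if h : m < n then prodN f m * f ⟨m, h⟩ else prodN f m

lemma prodN_eq {M : Type} [Monoid M] (f : Fin n → M) :
    prodN f n = ((List.finRange n).map f).prod := by
  have h : ∀ m ≤ n, prodN f m = (((List.finRange n).map f).take m).prod := by
    intro m
    induction m with
    | zero => intro _; simp [prodN]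
    | succ m ih =>
      intro hm
      rw [prodN, dif_pos (show m < n from hm), ih (by omega), List.prod_take_succ _ _ (by simpa using hm)]
      simp
  rw [h n le_rfl, List.take_of_length_le (by simp)]

def Lst (n : ℕ) : ℕ → List (Fin n)
  | 0 => []
  | m+1 => if h : m < n then ⟨m, h⟩ :: Lst n m else Lst n m

lemma Lst_length (m : ℕ) (hm : m ≤ n) : (Lst n m).length = m := by
  induction m with
  | zero => rfl
  | succ m ih => rw [Lst, dif_pos (show m < n from hm), List.length_cons, ih (by omega)]

lemma main_claim (m : ℕ) (hm : m ≤ n) : ∀ R : TT k n,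
    (∀ a b : Fin n, m ≤ (a:ℕ) → b ≤ a → wv k a b * R = 0) →
    ∃ e : ℕ, prodN (zeta k (n := n)) m * (PV k (Lst n m) * R) =
      (-1:ℤ)^e • (prodN (sx k (n := n)) m • (prodN (beta k (n := n)) m * R)) := by
  induction m with
  | zero => intro R _; exact ⟨0, by simp [prodN, Lst, PV_nil]⟩
  | succ m ih =>
    intro R hR
    have hm' : m < n := hm
    set i : Fin n := ⟨m, hm'⟩ with hi
    obtain ⟨e, he⟩ := ih (by omega) (beta k i * R) (by
      intro a b ha hb
      rcases Nat.eq_or_lt_of_le ha with h | h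
      · have : a = i := Fin.ext h.symm
        subst this
        rw [← mul_assoc, wv_comm, wv_beta hb, zero_mul]
      · rw [← mul_assoc, wv, beta, SC_mm, smul_mul_assoc, mul_assoc]
        have := hR a b h hb
        rw [wv] at this
        rw [this, mul_zero, smul_zero])
    simp only [prodN, Lst, dif_pos hm']
    rw [← hi, PV_cons]
    have h1 : V k i * (PV k (Lst n m) * R) = Vt k i * (PV k (Lst n m) * R) := by
      rw [V_eq, add_mul, Finset.sum_mul]
      rw [Finset.sum_eq_zero, add_zero]
      intro j hj
      have hj' : i < j := by simpa using hj
      have := hR j i hj' hj'.le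
      rw [wv] at this
      rw [smul_mul_assoc, wv, ← mul_assoc, SC_PV, smul_mul_assoc, mul_assoc, this, mul_zero,
        smul_zero, smul_zero]
    refine ⟨(i:ℕ) + (Lst n m).length * ((i:ℕ)+1) + e, ?_⟩
    have h2 : beta k i * PV k (Lst n m) =
      (-1:ℤ)^((Lst n m).length * ((i:ℕ)+1)) • (PV k (Lst n m) * beta k i) := mm_comm (SC_PV _) _
    rw [mul_assoc (V k i), h1, mul_assoc (prodN (zeta k (n := n)) m), ← mul_assoc (zeta k i), zeta_Vt,
      smul_mul_assoc, smul_mul_assoc, ← mul_assoc (beta k i), h2, smul_mul_assoc,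
      mul_assoc (PV k (Lst n m)), mul_smul_comm, mul_smul_comm, mul_smul_comm, he]
    rw [smul_comm (sx k i) ((-1:ℤ)^_), smul_comm (sx k i) ((-1:ℤ)^_), smul_smul, smul_smul,
      smul_smul, ← pow_add, ← pow_add, mul_comm (sx k i), mul_assoc, add_assoc]

lemma E_nodup_ne (L : List (Σ i : Fin n, Fin ((i:ℕ)+1))) (hL : L.Nodup) :
    (L.map (fun p => ExteriorAlgebra.ι k (qq k n p))).prod ≠ 0 := by
  have hcf : ∀ p p' : (Σ i : Fin n, Fin ((i:ℕ)+1)),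
      cf k (Finsupp.single (Fin.castLE p.1.isLt p.2) 1 + Finsupp.single p.1 1) (qq k n p') =
        if p' = p then 1 else 0 := by
    intro p p'
    rw [cf_apply, qq, q_coeff]
    refine if_congr ⟨fun h => ?_, fun h => by rw [h]⟩ rfl rfl
    obtain ⟨h1, h2⟩ := pair_inj (castLE_le _ _) (castLE_le _ _) h
    obtain ⟨i, l⟩ := p
    obtain ⟨i', l'⟩ := p'
    simp only at h1 h2
    subst h2
    rw [Fin.castLE_injective _ h1]
  let C : (Σ i : Fin n, Fin ((i:ℕ)+1)) → EE k n →ₗ[k] EE k n := fun p =>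
    CliffordAlgebra.contractLeft (Q := (0 : QuadraticForm k (S2 k n)))
      (cf k (Finsupp.single (Fin.castLE p.1.isLt p.2) 1 + Finsupp.single p.1 1))
  have hC : ∀ p p' (x : EE k n), C p (ExteriorAlgebra.ι k (qq k n p') * x) =
      (if p' = p then (1:k) else 0) • x - ExteriorAlgebra.ι k (qq k n p') * C p x := by
    intro p p' x
    rw [← hcf]
    exact CliffordAlgebra.contractLeft_ι_mul _ _ _
  have hC1 : ∀ p, C p 1 = 0 := fun p => CliffordAlgebra.contractLeft_one _ _
  have h0 : ∀ (L : List (Σ i : Fin n, Fin ((i:ℕ)+1))) (p), p ∉ L →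
      C p (L.map (fun p => ExteriorAlgebra.ι k (qq k n p))).prod = 0 := by
    intro L p
    induction L with
    | nil => intro _; simpa using hC1 p
    | cons a L ih =>
      intro h
      rw [List.mem_cons, not_or] at h
      rw [List.map_cons, List.prod_cons, hC, ih h.2, if_neg (fun h' => h.1 h'.symm)]
      simp
  induction L with
  | nil => simp
  | cons a L ih =>
    rw [List.nodup_cons] at hL
    intro h
    have h1 := congrArg (C a) h
    rw [List.map_cons, List.prod_cons, hC, h0 L a hL.1, if_pos rfl, map_zero, mul_zero, sub_zero,
      one_smul] at h1
    exact ih hL.2 h1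

lemma on_list (L : List (EE k n)) : on k L.prod = (L.map (on k)).prod := by
  induction L with
  | nil => rfl
  | cons a L ih => rw [List.prod_cons, on_mul, ih, List.map_cons, List.prod_cons]

lemma beta_prod : ∃ ω : EE k n, ω ≠ 0 ∧ prodN (beta k (n := n)) n = on k ω := by
  refine ⟨_, E_nodup_ne ((List.finRange n).sigma (fun i => List.finRange ((i:ℕ)+1)))
    (List.Nodup.sigma (List.nodup_finRange n) (fun i => List.nodup_finRange _)), ?_⟩
  have h : (((List.finRange n).sigma (fun i : Fin n => List.finRange ((i:ℕ)+1))).map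
      (fun p => ExteriorAlgebra.ι k (qq k n p))).prod =
      ((List.finRange n).map (fun i : Fin n => ExteriorAlgebra.ιMulti k ((i:ℕ)+1)
        (fun l : Fin ((i:ℕ)+1) => (q (Fin.castLE i.isLt l) i : S2 k n)))).prod := by
    generalize List.finRange n = L
    induction L with
    | nil => simp
    | cons a L ih =>
      rw [List.sigma_cons, List.map_append, List.prod_append, ih, List.map_cons, List.prod_cons]
      congr 1
      rw [ExteriorAlgebra.ιMulti_apply, List.ofFn_eq_map, List.map_map]
      rfl
  rw [h, on_list, List.map_map, prodN_eq]
  rfl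

end fin

end PF

/-- The product `Z_0 · Z_1 ⋯ Z_{n-1} ∈ K_N`, `N = n(n-1)/2`, is not a
Koszul boundary: it does not lie in the image of `d_{N+1} : K_{N+1} → K_N`. -/
theorem full_product_not_boundary (k : Type) [Field k] [CharZero k] (n : ℕ)
    (D : ℕ → KK k n →ₗ[k] KK k n) (hD : IsKoszulDiff D) :
    ((List.finRange n).map (fun i => (Zel i : KK k n))).prod ∉
      Submodule.map (D (n*(n-1)/2 + 1)) (Kt k n (n*(n-1)/2 + 1)) := by
  rintro ⟨z, hz, hzD⟩
  have h1 := PF.boundary_zero' D hD (n*(n-1)/2) (PF.Lst n n) (by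
    rw [PF.Lst_length n le_rfl]
    have := PF.finrank_S2_le (k := k) (n := n)
    omega) z hz
  rw [hzD, map_list_prod, List.map_map] at h1
  have h2 : ((List.finRange n).map (⇑(PF.Theta k n) ∘ fun i => Zel i)).prod =
      PF.prodN (PF.zeta k) n := (PF.prodN_eq _).symm
  rw [h2] at h1
  obtain ⟨e, he⟩ := PF.main_claim (k := k) (n := n) n le_rfl 1 (by
    intro a b ha _
    exact absurd a.isLt (not_lt.2 ha))
  rw [mul_one, mul_one] at he
  obtain ⟨ω, hω, hβ⟩ := PF.beta_prod (k := k) (n := n)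
  rw [he, hβ, map_zsmul, PF.on, TensorProduct.smul_tmul', PF.lamE_tmul, PF.prodN_eq, smul_eq_mul,
    mul_one] at h1
  have h3 := PF.lam_prod_ne (k := k) (n := n)
  rcases neg_one_pow_eq_or ℤ e with h | h
  · rw [h, one_smul] at h1
    exact smul_ne_zero h3 hω h1
  · rw [h, neg_one_smul, neg_eq_zero] at h1
    exact smul_ne_zero h3 hω h1

end
end
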